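/- For integers n and t with n ≥ 2t + 2 and t ≥ 1, D_R(G5) − D_R(G⁰(n,t)) = (5/3)n + (1/3)t − 31/3, where G5 is the cactus on n vertices consisting of t − 1 triangles, one quadrilateral C4, and n − 2t − 2 pendent edges, all sharing a single common vertex v1. -/

import Mathlib

open Finset

/-- Effective resistance between two vertices of a graph (for a connected graph
this is the effective resistance when every edge is a unit resistor), defined via
the matrix-tree / spanning-two-forest determinant formula. -/
noncomputable def effRes {V : Type*} [Finite V] (G : SimpleGraph V) (u v : V) : ℝ :=
  letI := Fintype.ofFinite V
  letI := Classical.decEq V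
  letI : DecidableRel G.Adj := Classical.decRel _
  if u = v then 0
  else
    Matrix.det ((G.lapMatrix ℝ).submatrix
        (fun w : {w : V // w ≠ u ∧ w ≠ v} => (w : V)) (fun w => (w : V)))
      / Matrix.det ((G.lapMatrix ℝ).submatrix
        (fun w : {w : V // w ≠ u} => (w : V)) (fun w => (w : V)))

/-- The degree resistance distance `D_R(G) = Σ_{ {u,v} ⊆ V } (d(u)+d(v)) R(u,v)`. -/
noncomputable def degRes {V : Type*} [Finite V] (G : SimpleGraph V) : ℝ :=
  letI := Fintype.ofFinite V
  letI := Classical.decEq V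
  letI : DecidableRel G.Adj := Classical.decRel _
  (1 / 2) * ∑ u : V, ∑ v : V, ((G.degree u : ℝ) + (G.degree v : ℝ)) * effRes G u v

/-- The Kirchhoff index `Kf(G) = Σ_{ {u,v} ⊆ V } R(u,v)`. -/
noncomputable def kirchhoffIndex {V : Type*} [Finite V] (G : SimpleGraph V) : ℝ :=
  letI := Fintype.ofFinite V
  (1 / 2) * ∑ u : V, ∑ v : V, effRes G u v

/-- `Kf_v(G) = Σ_{u ∈ V} R(u,v)`. -/
noncomputable def Kfv {V : Type*} [Finite V] (G : SimpleGraph V) (v : V) : ℝ :=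
  letI := Fintype.ofFinite V
  ∑ u : V, effRes G u v

/-- `D_v(G) = Σ_{u ∈ V} d(u) R(u,v)`. -/
noncomputable def Dv {V : Type*} [Finite V] (G : SimpleGraph V) (v : V) : ℝ :=
  letI := Fintype.ofFinite V
  letI := Classical.decEq V
  letI : DecidableRel G.Adj := Classical.decRel _
  ∑ u : V, (G.degree u : ℝ) * effRes G u v

/-- A subgraph is a cycle if it is connected and `2`-regular. -/
def IsCycleSubgraph {V : Type*} {G : SimpleGraph V} (H : G.Subgraph) : Prop :=
  H.coe.Connected ∧ ∀ v ∈ H.verts, {u | H.Adj v u}.ncard = 2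

/-- A cactus is a connected graph in which any two distinct cycles share at most
one vertex (equivalently, every block is an edge or a cycle). -/
def IsCactus {V : Type*} (G : SimpleGraph V) : Prop :=
  G.Connected ∧ ∀ H₁ H₂ : G.Subgraph, IsCycleSubgraph H₁ → IsCycleSubgraph H₂ →
    H₁ ≠ H₂ → (H₁.verts ∩ H₂.verts).ncard ≤ 1

/-- The number of cycles of a graph. -/
noncomputable def numCycles {V : Type*} (G : SimpleGraph V) : ℕ :=
  {H : G.Subgraph | IsCycleSubgraph H}.ncard

/-- `G ∈ Cact(n;t)`: `G` is a cactus with `n` vertices and `t` cycles. -/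
def MemCact {V : Type*} (n t : ℕ) (G : SimpleGraph V) : Prop :=
  IsCactus G ∧ Nat.card V = n ∧ numCycles G = t

/-- `G⁰(n,t)`: `t` triangles (on vertices `2i+1, 2i+2`, `i < t`) and `n - 2t - 1`
pendent edges, all sharing the common vertex `0`. -/
def G0 (n t : ℕ) : SimpleGraph (Fin n) :=
  SimpleGraph.fromRel (fun a b =>
    a.val = 0 ∨ (Odd a.val ∧ b.val = a.val + 1 ∧ b.val ≤ 2 * t))

/-- `G3`: `t` triangles, `n - 2t - 3` pendent edges, and one pendent path of
length 2 (through `2t+1` to `2t+2`), all attached at the common vertex `0`. -/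
def G3g (n t : ℕ) : SimpleGraph (Fin n) :=
  SimpleGraph.fromRel (fun a b =>
    (a.val = 0 ∧ b.val ≠ 2 * t + 2) ∨
    (Odd a.val ∧ b.val = a.val + 1 ∧ b.val ≤ 2 * t) ∨
    (a.val = 2 * t + 1 ∧ b.val = 2 * t + 2))

/-- `G4`: `t` triangles and `n - 2t - 2` pendent edges at the common vertex `0`,
together with one pendent edge (to `2t+1`) attached at the triangle vertex `1`. -/
def G4g (n t : ℕ) : SimpleGraph (Fin n) :=
  SimpleGraph.fromRel (fun a b =>
    (a.val = 0 ∧ b.val ≠ 2 * t + 1) ∨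
    (Odd a.val ∧ b.val = a.val + 1 ∧ b.val ≤ 2 * t) ∨
    (a.val = 1 ∧ b.val = 2 * t + 1))

/-- `G5`: `t - 1` triangles, one quadrilateral `C₄` (on `0, 2t-1, 2t, 2t+1`), and
`n - 2t - 2` pendent edges, all sharing the common vertex `0`. -/
def G5g (n t : ℕ) : SimpleGraph (Fin n) :=
  SimpleGraph.fromRel (fun a b =>
    (a.val = 0 ∧ b.val ≠ 2 * t) ∨
    (Odd a.val ∧ b.val = a.val + 1 ∧ b.val ≤ 2 * t - 2) ∨
    (a.val = 2 * t - 1 ∧ b.val = 2 * t) ∨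
    (a.val = 2 * t ∧ b.val = 2 * t + 1))

/-- `G6`: `t - 1` triangles, one quadrilateral `C₄` (on `0, 2t-1, 2t, 2t+1`), and
`n - 2t - 3` pendent edges at the common vertex `0`, together with one pendent edge
(to `2t+2`) attached at the quadrilateral vertex `2t-1`, which is adjacent to `0`. -/
def G6g (n t : ℕ) : SimpleGraph (Fin n) :=
  SimpleGraph.fromRel (fun a b =>
    (a.val = 0 ∧ b.val ≠ 2 * t ∧ b.val ≠ 2 * t + 2) ∨
    (Odd a.val ∧ b.val = a.val + 1 ∧ b.val ≤ 2 * t - 2) ∨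
    (a.val = 2 * t - 1 ∧ (b.val = 2 * t ∨ b.val = 2 * t + 2)) ∨
    (a.val = 2 * t ∧ b.val = 2 * t + 1))

/-- `G7`: `t - 1` triangles, one quadrilateral `C₄` (on `0, 2t-1, 2t, 2t+1`), and
`n - 2t - 3` pendent edges at the common vertex `0`, together with one pendent edge
(to `2t+2`) attached at the quadrilateral vertex `2t`, which is opposite to `0`. -/
def G7g (n t : ℕ) : SimpleGraph (Fin n) :=
  SimpleGraph.fromRel (fun a b =>
    (a.val = 0 ∧ b.val ≠ 2 * t ∧ b.val ≠ 2 * t + 2) ∨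
    (Odd a.val ∧ b.val = a.val + 1 ∧ b.val ≤ 2 * t - 2) ∨
    (a.val = 2 * t - 1 ∧ b.val = 2 * t) ∨
    (a.val = 2 * t ∧ (b.val = 2 * t + 1 ∨ b.val = 2 * t + 2)))

/-- `G8`: `t - 2` triangles, two quadrilaterals `C₄` (on `0, 2t-3, 2t-2, 2t-1` and
on `0, 2t, 2t+1, 2t+2`), and `n - 2t - 3` pendent edges, all sharing the common
vertex `0`. -/
def G8g (n t : ℕ) : SimpleGraph (Fin n) :=
  SimpleGraph.fromRel (fun a b =>
    (a.val = 0 ∧ b.val ≠ 2 * t - 2 ∧ b.val ≠ 2 * t + 1) ∨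
    (Odd a.val ∧ b.val = a.val + 1 ∧ b.val ≤ 2 * t - 4) ∨
    (a.val = 2 * t - 3 ∧ b.val = 2 * t - 2) ∨
    (a.val = 2 * t - 2 ∧ b.val = 2 * t - 1) ∨
    (a.val = 2 * t ∧ b.val = 2 * t + 1) ∨
    (a.val = 2 * t + 1 ∧ b.val = 2 * t + 2))

/-- `G9`: `t - 1` triangles, one quadrilateral `C₄` (on `0, 2t-1, 2t, 2t+1`), and
`n - 2t - 3` pendent edges at the common vertex `0`, together with one pendent edge
(to `2t+2`) attached at the non-central triangle vertex `1`. -/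
def G9g (n t : ℕ) : SimpleGraph (Fin n) :=
  SimpleGraph.fromRel (fun a b =>
    (a.val = 0 ∧ b.val ≠ 2 * t ∧ b.val ≠ 2 * t + 2) ∨
    (Odd a.val ∧ b.val = a.val + 1 ∧ b.val ≤ 2 * t - 2) ∨
    (a.val = 2 * t - 1 ∧ b.val = 2 * t) ∨
    (a.val = 2 * t ∧ b.val = 2 * t + 1) ∨
    (a.val = 1 ∧ b.val = 2 * t + 2))

/-- `G10`: `t - 1` triangles, one pentagon `C₅` (on `0, 2t-1, 2t, 2t+1, 2t+2`), and
`n - 2t - 3` pendent edges, all sharing the common vertex `0`. -/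
def G10g (n t : ℕ) : SimpleGraph (Fin n) :=
  SimpleGraph.fromRel (fun a b =>
    (a.val = 0 ∧ b.val ≠ 2 * t ∧ b.val ≠ 2 * t + 1) ∨
    (Odd a.val ∧ b.val = a.val + 1 ∧ b.val ≤ 2 * t - 2) ∨
    (a.val = 2 * t - 1 ∧ b.val = 2 * t) ∨
    (a.val = 2 * t ∧ b.val = 2 * t + 1) ∨
    (a.val = 2 * t + 1 ∧ b.val = 2 * t + 2))

/-! If `L φ = δ_u - δ_v` for the Laplacian `L` of a connected graph, then Cramer's rule, applied to
`L` grounded at `u`, turns the quotient of minors defining `R(u, v)` into `φ u - φ v`. Such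
potentials can be glued at a cut vertex, so resistances are additive across it, and the degree
resistance distance of a coalescence is expressed by invariants of its two parts at the common
vertex. Both `G5` and `G⁰(n, t)` arise from `G⁰(n - 3, t - 1)` by gluing a graph with four vertices
and four edges at `v₁`: a quadrilateral for `G5`, a triangle with a pendent edge for `G⁰(n, t)`. In
the difference everything cancels except the invariants of these two small graphs, weighted by the
numbers of vertices and edges of the common part. -/

open Matrix SimpleGraph

section Determinant

variable {m R : Type*} [Fintype m] [DecidableEq m] [CommRing R]

theorem det_submatrix_val_eq (M : Matrix m m R) (p : m → Prop) [DecidablePred p] :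
    (M.submatrix (Subtype.val : {i // p i} → m) Subtype.val).det =
      (of fun i j ↦ if p j then M i j else (1 : Matrix m m R) i j).det := by
  rw [twoBlockTriangular_det' _ p]
  · have hmain : toSquareBlockProp (of fun i j ↦ if p j then M i j else (1 : Matrix m m R) i j) p =
        M.submatrix (Subtype.val : {i // p i} → m) Subtype.val := by
      ext i j
      simp [toSquareBlockProp, j.2]
    have hone : toSquareBlockProp (of fun i j ↦ if p j then M i j else (1 : Matrix m m R) i j)
        (fun i ↦ ¬p i) = 1 := by
      ext i j
      simp [toSquareBlockProp, j.2, one_apply, Subtype.ext_iff]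
    rw [hmain, hone, det_one, mul_one]
  · intro i hi j hj
    simp [hj, one_apply_ne (fun h : i = j ↦ hj (h ▸ hi))]

theorem cramer_mulVec (M : Matrix m m R) (x : m → R) : M.cramer (M *ᵥ x) = M.det • x := by
  rw [cramer_eq_adjugate_mulVec, mulVec_mulVec, adjugate_mul, smul_mulVec, one_mulVec]

end Determinant

section Potential

variable {V : Type*} [Fintype V] [DecidableEq V] {G : SimpleGraph V} [DecidableRel G.Adj]

section CommRing

variable {R : Type*} [CommRing R]

theorem sum_lapMatrix_mulVec (φ : V → R) : ∑ v, (G.lapMatrix R *ᵥ φ) v = 0 := by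
  have hvec : (fun _ ↦ 1) ᵥ* G.lapMatrix R = 0 := by
    rw [← mulVec_transpose, (G.isSymm_lapMatrix (R := R)).eq, lapMatrix_mulVec_const_eq_zero]
  calc ∑ v, (G.lapMatrix R *ᵥ φ) v = (fun _ ↦ 1) ⬝ᵥ (G.lapMatrix R *ᵥ φ) := by simp [dotProduct]
    _ = 0 := by rw [dotProduct_mulVec, hvec, zero_dotProduct]

theorem lapMatrix_mulVec_const (r : R) : G.lapMatrix R *ᵥ (fun _ ↦ r) = 0 := by
  ext v
  simp [lapMatrix_mulVec_apply]

theorem lapMatrix_mulVec_add_const (φ : V → R) (r : R) :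
    G.lapMatrix R *ᵥ (φ + fun _ ↦ r) = G.lapMatrix R *ᵥ φ := by
  rw [mulVec_add, lapMatrix_mulVec_const, add_zero]

theorem lapMatrix_mulVec_eq_of_forall_ne {φ c : V → R} (hc : ∑ v, c v = 0) (o : V)
    (h : ∀ v ≠ o, (G.lapMatrix R *ᵥ φ) v = c v) : G.lapMatrix R *ᵥ φ = c := by
  have hsum : ∑ v, ((G.lapMatrix R *ᵥ φ) v - c v) = 0 := by
    rw [Finset.sum_sub_distrib, sum_lapMatrix_mulVec, hc, sub_zero]
  rw [Fintype.sum_eq_single o fun v hv ↦ sub_eq_zero.2 (h v hv)] at hsum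
  ext v
  obtain rfl | hv := eq_or_ne v o
  exacts [sub_eq_zero.1 hsum, h v hv]

end CommRing

variable (G) in
/-- The Laplacian of `G` with the vertex `o` grounded. Instead of deleting the row and the column
of `o`, only its column is replaced, by a standard basis vector: this leaves the determinant of
the deleted matrix and keeps the index type. -/
noncomputable def groundedLap (o : V) : Matrix V V ℝ :=
  (G.lapMatrix ℝ).updateCol o (Pi.single o 1)

theorem groundedLap_mulVec (o : V) (ψ : V → ℝ) :
    groundedLap G o *ᵥ ψ = G.lapMatrix ℝ *ᵥ Function.update ψ o 0 + Pi.single o (ψ o) := by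
  ext v
  simp only [groundedLap, mulVec, dotProduct, Pi.add_apply]
  rw [← Finset.add_sum_erase _ _ (Finset.mem_univ o),
    ← Finset.add_sum_erase _ (fun x ↦ G.lapMatrix ℝ v x * _) (Finset.mem_univ o)]
  have hne : ∀ x ∈ univ.erase o, (G.lapMatrix ℝ).updateCol o (Pi.single o 1) v x * ψ x =
      G.lapMatrix ℝ v x * Function.update ψ o 0 x := by
    intro x hx
    simp [Finset.ne_of_mem_erase hx]
  rw [Finset.sum_congr rfl hne]
  simp [Pi.single_apply, add_comm]

theorem apply_ground_of_groundedLap_mulVec_eq {o : V} {ψ c : V → ℝ}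
    (h : groundedLap G o *ᵥ ψ = c) : ψ o = ∑ v, c v := by
  rw [← h, groundedLap_mulVec]
  simp [Finset.sum_add_distrib, sum_lapMatrix_mulVec]

theorem det_groundedLap_ne_zero (hG : G.Connected) (o : V) : (groundedLap G o).det ≠ 0 := by
  rw [ne_eq, ← exists_mulVec_eq_zero_iff]
  rintro ⟨ψ, hψ, hker⟩
  have ho : ψ o = 0 := by simpa using apply_ground_of_groundedLap_mulVec_eq hker
  have hlap : G.lapMatrix ℝ *ᵥ ψ = 0 := by
    rwa [groundedLap_mulVec, ho, Pi.single_zero, add_zero, ← ho, Function.update_eq_self] at hker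
  refine hψ (funext fun v ↦ ?_)
  rw [(lapMatrix_mulVec_eq_zero_iff_forall_reachable G).1 hlap v o (hG.preconnected v o), ho,
    Pi.zero_apply]

theorem exists_lapMatrix_mulVec_eq (hG : G.Connected) {c : V → ℝ} (hc : ∑ v, c v = 0) (o : V)
    (r : ℝ) : ∃ φ : V → ℝ, φ o = r ∧ G.lapMatrix ℝ *ᵥ φ = c := by
  obtain ⟨ψ, hψ⟩ := mulVec_surjective_iff_isUnit.2 ((isUnit_iff_isUnit_det _).2
    (det_groundedLap_ne_zero hG o).isUnit) c
  have ho : ψ o = 0 := (apply_ground_of_groundedLap_mulVec_eq hψ).trans hc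
  refine ⟨ψ + fun _ ↦ r, by simp [ho], ?_⟩
  rwa [groundedLap_mulVec, ho, Pi.single_zero, add_zero, ← ho, Function.update_eq_self,
    ← lapMatrix_mulVec_add_const ψ r] at hψ

theorem effRes_eq_det_groundedLap_div {u v : V} (huv : u ≠ v) :
    effRes G u v =
      ((groundedLap G u).updateCol v (Pi.single v 1)).det / (groundedLap G u).det := by
  have hdef : effRes G u v = ((G.lapMatrix ℝ).submatrix
      (Subtype.val : {w // w ≠ u ∧ w ≠ v} → V) Subtype.val).det /
      ((G.lapMatrix ℝ).submatrix (Subtype.val : {w // w ≠ u} → V) Subtype.val).det := by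
    rw [effRes, if_neg huv]
    congr!
  rw [hdef, det_submatrix_val_eq, det_submatrix_val_eq]
  congr 2 <;> ext i j
  · by_cases hv : j = v
    · simp [hv, one_apply, Pi.single_apply]
    · by_cases hu : j = u <;>
        simp [hu, hv, huv, groundedLap, one_apply, Pi.single_apply]
  · by_cases hu : j = u <;> simp [hu, groundedLap, one_apply, Pi.single_apply]

theorem effRes_eq_sub (hG : G.Connected) {u v : V} {φ : V → ℝ}
    (hφ : G.lapMatrix ℝ *ᵥ φ = Pi.single u 1 - Pi.single v 1) : effRes G u v = φ u - φ v := by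
  obtain rfl | huv := eq_or_ne u v
  · simp [effRes]
  set ψ : V → ℝ := Function.update (fun w ↦ φ w - φ u) u (-1) with hψ
  have hψ₀ : Function.update ψ u 0 = φ + fun _ ↦ -φ u := by
    ext w
    obtain rfl | hw := eq_or_ne w u <;> simp [*, sub_eq_add_neg]
  have hground : groundedLap G u *ᵥ ψ = -Pi.single v 1 := by
    rw [groundedLap_mulVec, hψ₀, lapMatrix_mulVec_add_const, hφ, hψ, Function.update_self,
      Pi.single_neg]
    abel
  have hcramer := congrFun (cramer_mulVec (groundedLap G u) ψ) v
  rw [hground, map_neg, Pi.neg_apply, cramer_apply, Pi.smul_apply, smul_eq_mul, hψ,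
    Function.update_of_ne huv.symm] at hcramer
  rw [effRes_eq_det_groundedLap_div huv, div_eq_iff (det_groundedLap_ne_zero hG u)]
  linarith

theorem effRes_eq_of_lapMatrix_mulVec_col (hG : G.Connected) {Γ : Matrix V V ℝ} {c : V → ℝ}
    (h : ∀ u, G.lapMatrix ℝ *ᵥ Γ.col u = Pi.single u 1 - c) (u v : V) :
    effRes G u v = Γ u u - Γ u v - (Γ v u - Γ v v) :=
  effRes_eq_sub (φ := Γ.col u - Γ.col v) hG (by rw [mulVec_sub, h, h]; abel)

end Potential

theorem effRes_comm {V : Type*} [Finite V] {G : SimpleGraph V} (hG : G.Connected) (u v : V) :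
    effRes G u v = effRes G v u := by
  classical
  cases nonempty_fintype V
  obtain ⟨φ, -, hφ⟩ := exists_lapMatrix_mulVec_eq hG (c := Pi.single u 1 - Pi.single v 1)
    (by simp) u 0
  have hneg : G.lapMatrix ℝ *ᵥ (-φ) = Pi.single v 1 - Pi.single u 1 := by
    rw [mulVec_neg, hφ, neg_sub]
  rw [effRes_eq_sub hG hφ, effRes_eq_sub hG hneg]
  simp only [Pi.neg_apply]
  ring

section Sums

variable {V : Type*} [Fintype V]

theorem Kfv_eq_sum (G : SimpleGraph V) (v : V) : Kfv G v = ∑ u, effRes G u v := by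
  unfold Kfv
  congr!

variable (G : SimpleGraph V) [DecidableRel G.Adj]

theorem Dv_eq_sum (v : V) :
    Dv G v = ∑ u, (G.degree u : ℝ) * effRes G u v := by
  unfold Dv
  congr!

theorem sum_degree_eq_two_mul_ncard_edgeSet :
    ∑ u, (G.degree u : ℝ) = 2 * G.edgeSet.ncard := by
  classical
  rw [← Nat.cast_sum, sum_degrees_eq_twice_card_edges, ← coe_edgeFinset, Set.ncard_coe_finset]
  push_cast
  rfl

variable {G}

theorem degRes_eq_sum_degree_mul_Kfv (hG : G.Connected) :
    degRes G = ∑ u, (G.degree u : ℝ) * Kfv G u := by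
  have hdef : degRes G =
      (1 / 2) * ∑ u, ∑ v, ((G.degree u : ℝ) + (G.degree v : ℝ)) * effRes G u v := by
    unfold degRes
    congr!
  have hleft : ∑ u, ∑ v, (G.degree u : ℝ) * effRes G u v = ∑ u, (G.degree u : ℝ) * Kfv G u := by
    simp only [Kfv_eq_sum, Finset.mul_sum, effRes_comm hG]
  have hright : ∑ u, ∑ v, (G.degree v : ℝ) * effRes G u v = ∑ u, (G.degree u : ℝ) * Kfv G u := by
    rw [Finset.sum_comm]
    simp only [Kfv_eq_sum, Finset.mul_sum]
  simp only [hdef, add_mul, Finset.sum_add_distrib, hleft, hright]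
  ring

end Sums

/-- `G` is the coalescence of `H` and `K`, obtained by gluing their disjoint union along `a = b`:
`f` and `g` place `H` and `K` in `G` as induced subgraphs which cover `G`, meet in the
single vertex `f a = g b`, and have no edge between them away from that vertex. -/
structure IsCoalescence {V A B : Type*} (G : SimpleGraph V) (H : SimpleGraph A)
    (K : SimpleGraph B) (f : A ↪ V) (g : B ↪ V) (a : A) (b : B) : Prop where
  adj_left : ∀ x y, G.Adj (f x) (f y) ↔ H.Adj x y
  adj_right : ∀ x y, G.Adj (g x) (g y) ↔ K.Adj x y
  eq_or_eq_of_adj : ∀ x y, G.Adj (f x) (g y) → x = a ∨ y = b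
  apply_eq_apply_iff : ∀ x y, f x = g y ↔ x = a ∧ y = b
  mem_range_or_mem_range : ∀ v, v ∈ Set.range f ∨ v ∈ Set.range g

namespace IsCoalescence

variable {V A B : Type*} {G : SimpleGraph V} {H : SimpleGraph A} {K : SimpleGraph B}
  {f : A ↪ V} {g : B ↪ V} {a : A} {b : B}

theorem symm (h : IsCoalescence G H K f g a b) : IsCoalescence G K H g f b a where
  adj_left := h.adj_right
  adj_right := h.adj_left
  eq_or_eq_of_adj x y hxy := (h.eq_or_eq_of_adj y x hxy.symm).symm
  apply_eq_apply_iff x y := by rw [eq_comm, h.apply_eq_apply_iff, and_comm]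
  mem_range_or_mem_range v := (h.mem_range_or_mem_range v).symm

theorem apply_root (h : IsCoalescence G H K f g a b) : f a = g b :=
  (h.apply_eq_apply_iff a b).2 ⟨rfl, rfl⟩

theorem connected (h : IsCoalescence G H K f g a b) (hH : H.Connected) (hK : K.Connected) :
    G.Connected := by
  let F : H →g G := ⟨f, (h.adj_left _ _).2⟩
  let F' : K →g G := ⟨g, (h.adj_right _ _).2⟩
  refine (connected_iff_exists_forall_reachable G).2 ⟨f a, fun v ↦ ?_⟩
  obtain ⟨x, rfl⟩ | ⟨y, rfl⟩ := h.mem_range_or_mem_range v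
  · exact (hH.preconnected a x).map F
  · exact h.apply_root ▸ (hK.preconnected b y).map F'

theorem exists_comp_eq (h : IsCoalescence G H K f g a b) {α : Type*} {p : A → α}
    {q : B → α} (hpq : p a = q b) : ∃ φ : V → α, φ ∘ f = p ∧ φ ∘ g = q := by
  refine ⟨Function.extend f p (Function.extend g q fun _ ↦ p a), ?_, ?_⟩
  · exact funext fun x ↦ f.injective.extend_apply ..
  · ext y
    by_cases hy : ∃ x, f x = g y
    · obtain ⟨x, hx⟩ := hy
      obtain ⟨rfl, rfl⟩ := (h.apply_eq_apply_iff x y).1 hx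
      rw [Function.comp_apply, ← hx, f.injective.extend_apply, hpq]
    · rw [Function.comp_apply, Function.extend_apply' _ _ _ hy, g.injective.extend_apply]

section Fintype

section Left

variable [Fintype V] [Fintype A] [DecidableRel G.Adj] [DecidableRel H.Adj]

theorem neighborFinset_left (h : IsCoalescence G H K f g a b) {x : A} (hx : x ≠ a) :
    G.neighborFinset (f x) = (H.neighborFinset x).map f := by
  ext v
  simp only [mem_neighborFinset, Finset.mem_map]
  constructor
  · intro hv
    obtain ⟨y, rfl⟩ | ⟨y, rfl⟩ := h.mem_range_or_mem_range v
    · exact ⟨y, (h.adj_left x y).1 hv, rfl⟩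
    · obtain rfl := (h.eq_or_eq_of_adj x y hv).resolve_left hx
      rw [← h.apply_root] at hv ⊢
      exact ⟨a, (h.adj_left x a).1 hv, rfl⟩
  · rintro ⟨y, hy, rfl⟩
    exact (h.adj_left x y).2 hy

theorem degree_left (h : IsCoalescence G H K f g a b) {x : A} (hx : x ≠ a) :
    G.degree (f x) = H.degree x := by
  rw [← card_neighborFinset_eq_degree, h.neighborFinset_left hx, Finset.card_map,
    card_neighborFinset_eq_degree]

variable [DecidableEq V] [DecidableEq A]

theorem lapMatrix_mulVec_left (h : IsCoalescence G H K f g a b) {x : A} (hx : x ≠ a)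
    {R : Type*} [CommRing R] (φ : V → R) :
    (G.lapMatrix R *ᵥ φ) (f x) = (H.lapMatrix R *ᵥ (φ ∘ f)) x := by
  simp [lapMatrix_mulVec_apply, h.neighborFinset_left hx, h.degree_left hx]

end Left

variable [Fintype V] [Fintype A] [Fintype B]

theorem sum_add_apply_root (h : IsCoalescence G H K f g a b) {M : Type*}
    [AddCommMonoid M] (F : V → M) :
    ∑ v, F v + F (f a) = ∑ x, F (f x) + ∑ y, F (g y) := by
  classical
  have hunion : univ.map f ∪ univ.map g = univ := by
    ext v
    simpa using h.mem_range_or_mem_range v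
  have hinter : univ.map f ∩ univ.map g = {f a} := by
    ext v
    simp only [Finset.mem_inter, Finset.mem_map, Finset.mem_univ, true_and, Finset.mem_singleton]
    constructor
    · rintro ⟨⟨x, rfl⟩, y, hy⟩
      rw [((h.apply_eq_apply_iff x y).1 hy.symm).1]
    · rintro rfl
      exact ⟨⟨a, rfl⟩, b, h.apply_root.symm⟩
  rw [← Finset.sum_map univ f F, ← Finset.sum_map univ g F, ← Finset.sum_union_inter, hunion,
    hinter, Finset.sum_singleton]

variable [DecidableRel G.Adj] [DecidableRel H.Adj] [DecidableRel K.Adj]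

theorem neighborFinset_root [DecidableEq V] (h : IsCoalescence G H K f g a b) :
    G.neighborFinset (f a) = (H.neighborFinset a).map f ∪ (K.neighborFinset b).map g := by
  ext v
  simp only [mem_neighborFinset, Finset.mem_union, Finset.mem_map]
  constructor
  · intro hv
    obtain ⟨y, rfl⟩ | ⟨y, rfl⟩ := h.mem_range_or_mem_range v
    · exact .inl ⟨y, (h.adj_left a y).1 hv, rfl⟩
    · exact .inr ⟨y, (h.adj_right b y).1 (h.apply_root ▸ hv), rfl⟩
  · rintro (⟨y, hy, rfl⟩ | ⟨y, hy, rfl⟩)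
    · exact (h.adj_left a y).2 hy
    · exact h.apply_root ▸ (h.adj_right b y).2 hy

theorem degree_root (h : IsCoalescence G H K f g a b) :
    G.degree (f a) = H.degree a + K.degree b := by
  classical
  have hdisj : Disjoint ((H.neighborFinset a).map f) ((K.neighborFinset b).map g) := by
    simp only [Finset.disjoint_left, Finset.mem_map, mem_neighborFinset]
    rintro _ ⟨x, hx, rfl⟩ ⟨y, -, hxy⟩
    exact hx.ne ((h.apply_eq_apply_iff x y).1 hxy.symm).1.symm
  rw [← card_neighborFinset_eq_degree, h.neighborFinset_root, Finset.card_union_of_disjoint hdisj,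
    Finset.card_map, Finset.card_map, card_neighborFinset_eq_degree, card_neighborFinset_eq_degree]

theorem sum_degree_mul (h : IsCoalescence G H K f g a b) {R : Type*} [CommRing R] (F : V → R) :
    ∑ v, (G.degree v : R) * F v =
      ∑ x, (H.degree x : R) * F (f x) + ∑ y, (K.degree y : R) * F (g y) := by
  classical
  have hleft (x : A) : (G.degree (f x) : R) * F (f x) =
      H.degree x * F (f x) + if x = a then K.degree b * F (f a) else 0 := by
    obtain rfl | hx := eq_or_ne x a
    · simp [h.degree_root, add_mul]
    · simp [h.degree_left hx, hx]
  have hright (y : B) : (G.degree (g y) : R) * F (g y) =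
      K.degree y * F (g y) + if y = b then H.degree a * F (f a) else 0 := by
    obtain rfl | hy := eq_or_ne y b
    · simp [h.symm.degree_root, h.apply_root, add_mul]
    · simp [h.symm.degree_left hy, hy]
  have hsum := h.sum_add_apply_root fun v ↦ (G.degree v : R) * F v
  simp only [hleft, hright, Finset.sum_add_distrib, Finset.sum_ite_eq', Finset.mem_univ,
    if_true] at hsum
  linear_combination hsum

variable [DecidableEq V] [DecidableEq A] [DecidableEq B]

theorem lapMatrix_mulVec_eq {R : Type*} [CommRing R] (h : IsCoalescence G H K f g a b)
    {φ c : V → R} (hc : ∑ v, c v = 0)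
    (hf : ∀ x ≠ a, (H.lapMatrix R *ᵥ (φ ∘ f)) x = c (f x))
    (hg : ∀ y ≠ b, (K.lapMatrix R *ᵥ (φ ∘ g)) y = c (g y)) : G.lapMatrix R *ᵥ φ = c := by
  refine lapMatrix_mulVec_eq_of_forall_ne hc (f a) fun v hv ↦ ?_
  obtain ⟨x, rfl⟩ | ⟨y, rfl⟩ := h.mem_range_or_mem_range v
  · have hx : x ≠ a := fun hx ↦ hv (congrArg f hx)
    rw [h.lapMatrix_mulVec_left hx, hf x hx]
  · have hy : y ≠ b := fun hy ↦ hv (hy ▸ h.apply_root.symm)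
    rw [h.symm.lapMatrix_mulVec_left hy, hg y hy]

end Fintype

section Resistance

variable [Finite V] [Finite A] [Finite B]

theorem effRes_left (h : IsCoalescence G H K f g a b) (hH : H.Connected) (hK : K.Connected)
    (x y : A) : effRes G (f x) (f y) = effRes H x y := by
  classical
  cases nonempty_fintype V
  cases nonempty_fintype A
  cases nonempty_fintype B
  obtain ⟨p, -, hp⟩ := exists_lapMatrix_mulVec_eq hH (c := Pi.single x 1 - Pi.single y 1)
    (by simp) x 0
  obtain ⟨φ, rfl, hφg⟩ := h.exists_comp_eq (p := p) (q := fun _ ↦ p a) rfl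
  have hφ : G.lapMatrix ℝ *ᵥ φ = Pi.single (f x) 1 - Pi.single (f y) 1 := by
    refine h.lapMatrix_mulVec_eq (by simp) (fun z _ ↦ ?_) fun z hz ↦ ?_
    · simp [hp, Pi.single_apply]
    · have hne : ∀ w, g z ≠ f w := fun w hw ↦ hz ((h.apply_eq_apply_iff w z).1 hw.symm).2
      simp [hφg, lapMatrix_mulVec_const, hne]
  rw [effRes_eq_sub (h.connected hH hK) hφ, effRes_eq_sub hH hp, Function.comp_apply,
    Function.comp_apply]

theorem effRes_left_right (h : IsCoalescence G H K f g a b) (hH : H.Connected)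
    (hK : K.Connected) (x : A) (y : B) :
    effRes G (f x) (g y) = effRes H x a + effRes K b y := by
  classical
  cases nonempty_fintype V
  cases nonempty_fintype A
  cases nonempty_fintype B
  obtain ⟨p, hpa, hp⟩ := exists_lapMatrix_mulVec_eq hH (c := Pi.single x 1 - Pi.single a 1)
    (by simp) a 0
  obtain ⟨q, hqb, hq⟩ := exists_lapMatrix_mulVec_eq hK (c := Pi.single b 1 - Pi.single y 1)
    (by simp) b 0
  obtain ⟨φ, rfl, rfl⟩ := h.exists_comp_eq (hpa.trans hqb.symm)
  have hφ : G.lapMatrix ℝ *ᵥ φ = Pi.single (f x) 1 - Pi.single (g y) 1 := by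
    refine h.lapMatrix_mulVec_eq (by simp) (fun z hz ↦ ?_) fun z hz ↦ ?_
    · have hne : f z ≠ g y := fun hzy ↦ hz ((h.apply_eq_apply_iff z y).1 hzy).1
      simp [hp, Pi.single_apply, hz, hne]
    · have hne : g z ≠ f x := fun hzx ↦ hz ((h.apply_eq_apply_iff x z).1 hzx.symm).2
      simp [hq, Pi.single_apply, hz, hne]
  rw [effRes_eq_sub (h.connected hH hK) hφ, effRes_eq_sub hH hp, effRes_eq_sub hK hq, hpa, hqb]
  simp only [Function.comp_apply]
  ring

theorem Kfv_left (h : IsCoalescence G H K f g a b) (hH : H.Connected) (hK : K.Connected)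
    (x : A) :
    Kfv G (f x) = Kfv H x + Kfv K b + (Nat.card B - 1) * effRes H x a := by
  cases nonempty_fintype V
  cases nonempty_fintype A
  cases nonempty_fintype B
  have hsum := h.sum_add_apply_root fun v ↦ effRes G v (f x)
  simp only [h.effRes_left hH hK, h.symm.effRes_left_right hK hH, effRes_comm hH a x,
    Finset.sum_add_distrib, ← Kfv_eq_sum, Finset.sum_const, Finset.card_univ, nsmul_eq_mul] at hsum
  rw [Nat.card_eq_fintype_card]
  linarith

end Resistance

theorem sum_degree_mul_Kfv_left [Finite V] [Fintype A] [Finite B] [DecidableRel H.Adj]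
    (h : IsCoalescence G H K f g a b) (hH : H.Connected) (hK : K.Connected) :
    ∑ x, (H.degree x : ℝ) * Kfv G (f x) =
      degRes H + 2 * H.edgeSet.ncard * Kfv K b + (Nat.card B - 1) * Dv H a := by
  simp only [h.Kfv_left hH hK, mul_add, Finset.sum_add_distrib, ← Finset.sum_mul,
    ← degRes_eq_sum_degree_mul_Kfv hH, sum_degree_eq_two_mul_ncard_edgeSet, Dv_eq_sum,
    Finset.mul_sum, mul_left_comm]

theorem degRes_eq [Finite V] [Finite A] [Finite B] (h : IsCoalescence G H K f g a b)
    (hH : H.Connected) (hK : K.Connected) :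
    degRes G = degRes H + degRes K
      + 2 * H.edgeSet.ncard * Kfv K b + 2 * K.edgeSet.ncard * Kfv H a
      + (Nat.card B - 1) * Dv H a + (Nat.card A - 1) * Dv K b := by
  classical
  cases nonempty_fintype V
  cases nonempty_fintype A
  cases nonempty_fintype B
  rw [degRes_eq_sum_degree_mul_Kfv (h.connected hH hK), h.sum_degree_mul,
    h.sum_degree_mul_Kfv_left hH hK, h.symm.sum_degree_mul_Kfv_left hK hH]
  ring

end IsCoalescence

section Cactus

/-- The inclusion of `G0 (k + 1) s` in a graph on `Fin (k + 4)`: the `s` triangles stay on the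
vertices up to `2 * s`, and the pendent vertices are moved up by three, past the image of
`blockEmb`. -/
def coreEmb (k s : ℕ) : Fin (k + 1) ↪ Fin (k + 4) where
  toFun j := ⟨if j.val ≤ 2 * s then j else j + 3, by split_ifs <;> omega⟩
  inj' i j hij := by
    simp only [Fin.mk.injEq] at hij
    split_ifs at hij <;> omega

/-- The inclusion of a graph on four vertices in a graph on `Fin (k + 4)`, with `0` sent to the
common vertex `0` and the other vertices sent to `2 * s + 1`, `2 * s + 2`, `2 * s + 3`. -/
def blockEmb {k s : ℕ} (hs : 2 * s ≤ k) : Fin 4 ↪ Fin (k + 4) where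
  toFun i := ⟨if i.val = 0 then 0 else i + 2 * s, by split_ifs <;> omega⟩
  inj' i j hij := by
    simp only [Fin.mk.injEq] at hij
    split_ifs at hij <;> omega

theorem val_coreEmb (k s : ℕ) (j : Fin (k + 1)) :
    (coreEmb k s j).val = if j.val ≤ 2 * s then j.val else j.val + 3 := rfl

variable {k s : ℕ}

theorem val_blockEmb (hs : 2 * s ≤ k) (i : Fin 4) :
    (blockEmb hs i).val = if i.val = 0 then 0 else i.val + 2 * s := rfl

theorem mem_range_coreEmb_or_mem_range_blockEmb (hs : 2 * s ≤ k) (v : Fin (k + 4)) :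
    v ∈ Set.range (coreEmb k s) ∨ v ∈ Set.range (blockEmb hs) := by
  by_cases hv : v.val ≤ 2 * s
  · refine .inl ⟨⟨v, by omega⟩, Fin.ext ?_⟩
    simp [val_coreEmb, hv]
  by_cases hv' : v.val ≤ 2 * s + 3
  · refine .inr ⟨⟨v - 2 * s, by omega⟩, Fin.ext ?_⟩
    simp only [val_blockEmb]
    split_ifs <;> omega
  · refine .inl ⟨⟨v - 3, by omega⟩, Fin.ext ?_⟩
    simp only [val_coreEmb]
    split_ifs <;> omega

theorem coreEmb_eq_blockEmb_iff (hs : 2 * s ≤ k) (x : Fin (k + 1)) (y : Fin 4) :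
    coreEmb k s x = blockEmb hs y ↔ x = 0 ∧ y = 0 := by
  simp only [val_coreEmb, val_blockEmb, Fin.ext_iff, Fin.val_zero]
  grind

theorem G0_isCoalescence (hs : 2 * s ≤ k) :
    IsCoalescence (G0 (k + 4) (s + 1)) (G0 (k + 1) s) (G0 4 1) (coreEmb k s) (blockEmb hs) 0 0 where
  adj_left x y := by
    simp only [G0, val_coreEmb, fromRel_adj, Fin.ext_iff, ne_eq, Nat.odd_iff]
    grind
  adj_right x y := by
    simp only [G0, val_blockEmb, fromRel_adj, Fin.ext_iff, ne_eq, Nat.odd_iff]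
    grind
  eq_or_eq_of_adj x y := by
    simp only [G0, val_coreEmb, val_blockEmb, fromRel_adj, Fin.ext_iff, ne_eq, Nat.odd_iff,
      Fin.val_zero]
    grind
  apply_eq_apply_iff := coreEmb_eq_blockEmb_iff hs
  mem_range_or_mem_range := mem_range_coreEmb_or_mem_range_blockEmb hs

theorem G5g_isCoalescence (hs : 2 * s ≤ k) :
    IsCoalescence (G5g (k + 4) (s + 1)) (G0 (k + 1) s) (G5g 4 1) (coreEmb k s) (blockEmb hs)
      0 0 where
  adj_left x y := by
    simp only [G0, G5g, val_coreEmb, fromRel_adj, Fin.ext_iff, ne_eq, Nat.odd_iff]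
    grind
  adj_right x y := by
    simp only [G5g, val_blockEmb, fromRel_adj, Fin.ext_iff, ne_eq, Nat.odd_iff]
    split_ifs <;> grind
  eq_or_eq_of_adj x y := by
    simp only [G5g, val_coreEmb, val_blockEmb, fromRel_adj, Fin.ext_iff, ne_eq, Nat.odd_iff,
      Fin.val_zero]
    grind
  apply_eq_apply_iff := coreEmb_eq_blockEmb_iff hs
  mem_range_or_mem_range := mem_range_coreEmb_or_mem_range_blockEmb hs

theorem G0_connected (n t : ℕ) : (G0 (n + 1) t).Connected :=
  Connected.of_isUniversal (v := 0) fun v hv ↦ by simp [G0, hv]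

theorem G0_succ (hs : 2 * s + 2 ≤ k) :
    G0 (k + 1) (s + 1) =
      G0 (k + 1) s ⊔ edge ⟨2 * s + 1, by omega⟩ ⟨2 * s + 2, by omega⟩ := by
  ext x y
  simp only [G0, fromRel_adj, sup_adj, edge_adj, ne_eq, Fin.ext_iff, Nat.odd_iff]
  omega

theorem ncard_edgeSet_G0 (hs : 2 * s ≤ k) : (G0 (k + 1) s).edgeSet.ncard = k + s := by
  classical
  induction s with
  | zero =>
    have hstar : G0 (k + 1) 0 = starGraph 0 := by
      ext x y
      simp only [G0, starGraph_adj, fromRel_adj, ne_eq, Fin.ext_iff, Nat.odd_iff, Fin.val_zero]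
      omega
    have hcard := (isTree_starGraph (0 : Fin (k + 1))).card_edgeFinset
    rw [hstar, ← coe_edgeFinset, Set.ncard_coe_finset]
    simpa using hcard
  | succ s ih =>
    have hnadj : ¬(G0 (k + 1) s).Adj ⟨2 * s + 1, by omega⟩ ⟨2 * s + 2, by omega⟩ := by
      simp only [G0, fromRel_adj]
      omega
    have hcard := card_edgeFinset_sup_edge _ hnadj (by simp)
    rw [G0_succ hs, ← coe_edgeFinset, Set.ncard_coe_finset, hcard, ← Set.ncard_coe_finset,
      coe_edgeFinset, ih (by omega), add_assoc]

end Cactus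

section FourVertices

instance (n t : ℕ) : DecidableRel (G0 n t).Adj := inferInstanceAs (DecidableRel (fromRel _).Adj)

instance (n t : ℕ) : DecidableRel (G5g n t).Adj := inferInstanceAs (DecidableRel (fromRel _).Adj)

theorem G0_four_one_connected : (G0 4 1).Connected := G0_connected 3 1

theorem degree_G0_four_one (v : Fin 4) : (G0 4 1).degree v = ![3, 2, 2, 1] v := by
  revert v
  decide

theorem lapMatrix_G0_four_one : (G0 4 1).lapMatrix ℝ =
    !![3, -1, -1, -1; -1, 2, -1, 0; -1, -1, 2, 0; -1, 0, 0, 1] := by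
  ext i j
  simp only [lapMatrix, degMatrix, Matrix.sub_apply, diagonal_apply, adjMatrix_apply,
    degree_G0_four_one]
  fin_cases i <;> fin_cases j <;> norm_num +decide

-- `Γ` is the inverse of the Laplacian with row and column `0` deleted, bordered by zeros.
theorem effRes_G0_four_one (u v : Fin 4) : effRes (G0 4 1) u v =
    !![0, 2/3, 2/3, 1; 2/3, 0, 2/3, 5/3; 2/3, 2/3, 0, 5/3; 1, 5/3, 5/3, 0] u v := by
  rw [effRes_eq_of_lapMatrix_mulVec_col G0_four_one_connected (c := Pi.single 0 1)
    (Γ := !![0, 0, 0, 0; 0, 2/3, 1/3, 0; 0, 1/3, 2/3, 0; 0, 0, 0, 1])]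
  · fin_cases u <;> fin_cases v <;> norm_num
  · intro w
    rw [lapMatrix_G0_four_one]
    ext i
    simp only [mulVec, dotProduct, Fin.sum_univ_four, col_apply, of_apply, Pi.sub_apply,
      Pi.single_apply]
    fin_cases w <;> fin_cases i <;>
      simp only [Fin.zero_eta, Fin.mk_one, Fin.reduceFinMk, Matrix.cons_val, Fin.reduceEq,
        reduceIte] <;> norm_num

theorem Kfv_G0_four_one : Kfv (G0 4 1) 0 = 7 / 3 := by
  simp only [Kfv_eq_sum, effRes_G0_four_one, Fin.sum_univ_four, of_apply, Matrix.cons_val]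
  norm_num

theorem Dv_G0_four_one : Dv (G0 4 1) 0 = 11 / 3 := by
  simp only [Dv_eq_sum, effRes_G0_four_one, degree_G0_four_one, Fin.sum_univ_four, of_apply,
    Matrix.cons_val]
  norm_num

theorem degRes_G0_four_one : degRes (G0 4 1) = 70 / 3 := by
  simp only [degRes_eq_sum_degree_mul_Kfv G0_four_one_connected, Kfv_eq_sum, effRes_G0_four_one,
    degree_G0_four_one, Fin.sum_univ_four, of_apply, Matrix.cons_val]
  norm_num

theorem ncard_edgeSet_G0_four_one : (G0 4 1).edgeSet.ncard = 4 :=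
  ncard_edgeSet_G0 (k := 3) (by norm_num)

theorem G5g_four_one_eq_cycleGraph : G5g 4 1 = cycleGraph 4 := by
  ext x y
  revert x y
  decide

theorem G5g_four_one_connected : (G5g 4 1).Connected :=
  G5g_four_one_eq_cycleGraph ▸ cycleGraph_connected

theorem degree_G5g_four_one (v : Fin 4) : (G5g 4 1).degree v = 2 := by
  revert v
  decide

theorem lapMatrix_G5g_four_one : (G5g 4 1).lapMatrix ℝ =
    !![2, -1, 0, -1; -1, 2, -1, 0; 0, -1, 2, -1; -1, 0, -1, 2] := by
  ext i j
  simp only [lapMatrix, degMatrix, Matrix.sub_apply, diagonal_apply, adjMatrix_apply,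
    degree_G5g_four_one]
  fin_cases i <;> fin_cases j <;> norm_num +decide

theorem effRes_G5g_four_one (u v : Fin 4) : effRes (G5g 4 1) u v =
    !![0, 3/4, 1, 3/4; 3/4, 0, 3/4, 1; 1, 3/4, 0, 3/4; 3/4, 1, 3/4, 0] u v := by
  rw [effRes_eq_of_lapMatrix_mulVec_col G5g_four_one_connected (c := Pi.single 0 1)
    (Γ := !![0, 0, 0, 0; 0, 3/4, 1/2, 1/4; 0, 1/2, 1, 1/2; 0, 1/4, 1/2, 3/4])]
  · fin_cases u <;> fin_cases v <;> norm_num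
  · intro w
    rw [lapMatrix_G5g_four_one]
    ext i
    simp only [mulVec, dotProduct, Fin.sum_univ_four, col_apply, of_apply, Pi.sub_apply,
      Pi.single_apply]
    fin_cases w <;> fin_cases i <;>
      simp only [Fin.zero_eta, Fin.mk_one, Fin.reduceFinMk, Matrix.cons_val, Fin.reduceEq,
        reduceIte] <;> norm_num

theorem Kfv_G5g_four_one (v : Fin 4) : Kfv (G5g 4 1) v = 5 / 2 := by
  simp only [Kfv_eq_sum, effRes_G5g_four_one, Fin.sum_univ_four, of_apply, Matrix.cons_val]
  fin_cases v <;> norm_num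

theorem Dv_G5g_four_one (v : Fin 4) : Dv (G5g 4 1) v = 5 := by
  simp only [Dv_eq_sum, degree_G5g_four_one, ← Finset.mul_sum, ← Kfv_eq_sum, Kfv_G5g_four_one]
  norm_num

theorem degRes_G5g_four_one : degRes (G5g 4 1) = 20 := by
  norm_num [degRes_eq_sum_degree_mul_Kfv G5g_four_one_connected, degree_G5g_four_one,
    Kfv_G5g_four_one]

theorem ncard_edgeSet_G5g_four_one : (G5g 4 1).edgeSet.ncard = 4 := by
  have hsum := sum_degree_eq_two_mul_ncard_edgeSet (G5g 4 1)
  norm_num [degree_G5g_four_one] at hsum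
  exact_mod_cast (by linarith : ((G5g 4 1).edgeSet.ncard : ℝ) = 4)

end FourVertices

/-- `D_R(G5) - D_R(G⁰(n,t)) = (5/3)n + (1/3)t - 31/3`. -/
theorem stmt_10 (n t : ℕ) (h1 : 2 * t + 2 ≤ n) (ht : 1 ≤ t) :
    degRes (G5g n t) - degRes (G0 n t) = (5 / 3) * (n : ℝ) + (1 / 3) * t - 31 / 3 := by
  obtain ⟨s, rfl⟩ := Nat.exists_eq_add_of_le' ht
  obtain ⟨k, rfl⟩ : ∃ k, n = k + 4 := ⟨n - 4, by omega⟩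
  have hs : 2 * s ≤ k := by omega
  have hcore : (G0 (k + 1) s).Connected := G0_connected k s
  rw [(G5g_isCoalescence hs).degRes_eq hcore G5g_four_one_connected,
    (G0_isCoalescence hs).degRes_eq hcore G0_four_one_connected, ncard_edgeSet_G0 hs,
    ncard_edgeSet_G5g_four_one, ncard_edgeSet_G0_four_one, Kfv_G5g_four_one, Kfv_G0_four_one,
    Dv_G5g_four_one, Dv_G0_four_one, degRes_G5g_four_one, degRes_G0_four_one, Nat.card_fin,
    Nat.card_fin]
  push_cast
  ring
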